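/- arXiv:1802.02346 — 7 statements merged into one kernel-verified Lean document; each statement's English description precedes it below -/
import Mathlib

section
/- Let n ≥ 1, q ≥ 0, let f : (Fin n → ZMod 2) → (Fin n → ZMod 2), and let d be the maximum over all y : Fin n → ZMod 2 of the cardinality of the fiber {x | f x = y}. If 2^q < d, then there is no bijection g : (Fin n → ZMod 2) × (Fin q → ZMod 2) → (Fin n → ZMod 2) × (Fin q → ZMod 2) such that (g (x, 0)).1 = f x for all x. -/
/-- Assertion 1 of the paper: if `2^q < d`, where `d` is the maximal
fiber cardinality of `f`, then no bijection of `ZZ_2^{n+q}` projects on padded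
inputs to `f`. -/
theorem no_bijective_extension_of_pow_lt_max_fiber
    (n q : ℕ) (hn : 1 ≤ n)
    (f : (Fin n → ZMod 2) → (Fin n → ZMod 2)) (d : ℕ)
    (hd : d = Finset.univ.sup fun y : Fin n → ZMod 2 =>
      Nat.card {x : Fin n → ZMod 2 | f x = y})
    (hlt : 2 ^ q < d) :
    ¬ ∃ g : (Fin n → ZMod 2) × (Fin q → ZMod 2) ≃ (Fin n → ZMod 2) × (Fin q → ZMod 2),
        ∀ x : Fin n → ZMod 2, (g (x, 0)).1 = f x := by
  rintro ⟨g, hg⟩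
  rw [hd, Finset.lt_sup_iff] at hlt
  obtain ⟨y, -, hy⟩ := hlt
  -- On the fiber over `y` the first output of `g` is constantly `y`,
  -- so the second output already separates its points.
  have hinj : Function.Injective
      fun x : {x : Fin n → ZMod 2 | f x = y} => (g (x.1, 0)).2 := by
    rintro ⟨a, ha⟩ ⟨b, hb⟩ hab
    have h1 : (g (a, 0)).1 = (g (b, 0)).1 := by
      rw [hg, hg]
      exact Eq.trans ha (Eq.symm hb)
    have h := g.injective (Prod.ext h1 hab)
    exact Subtype.ext (congrArg Prod.fst h)
  have hle := Nat.card_le_card_of_injective _ hinj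
  have hcard : Nat.card (Fin q → ZMod 2) = 2 ^ q := by
    simp
  omega
end

section
/- Let n ≥ 1 and q ≥ 1, and let f : (Fin n → ZMod 2) → (Fin n → ZMod 2) be such that every fiber {x | f x = y} has cardinality at most 2^q. Then there exists a permutation h of (Fin n → ZMod 2) × (Fin q → ZMod 2) such that: (i) h is even (its sign equals 1); (ii) (h (x, 0)).1 = f x for every x : Fin n → ZMod 2; (iii) the number of points moved by h (the cardinality of its support) is at most 2^(n+1). -/
/-!
Write `A` for the zero section `{(x, 0)}`. A map `f` whose fibers are no larger than the second
factor lifts to an injection `x ↦ (f x, c x)`; call its image `B`. Any injection `A → B` extends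
to a permutation fixing everything outside `A ∪ B` (`exists_perm_extending_section`), and
`A ∪ B` has at most `2 * 2 ^ n` points.

Parity is corrected by precomposing with one transposition of two points of `A ∪ B` that preserves
the extension property (`exists_even_of_swap`). If `f x = f x'` with `x ≠ x'`, exchange `(x, 0)`
and `(x', 0)`. If `f` is injective, lift it by a constant `c ≠ 0`; then `B` is disjoint from `A`
and two points of `B` can be exchanged.
-/

/-- An injection of the zero section into `X × Q` extends to a permutation supported on the union
of the zero section and the image: it is extended inside that finite union, where injections
extend to bijections by counting. -/
theorem exists_perm_extending_section {X Q : Type*} [Fintype X] [Fintype Q] [DecidableEq X]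
    [DecidableEq Q] [Zero Q] (g : X → X × Q) (hg : Function.Injective g) :
    ∃ h : Equiv.Perm (X × Q), (∀ x, h (x, 0) = g x) ∧
      h.support ⊆ Finset.univ.image (fun x : X => (x, (0 : Q))) ∪ Finset.univ.image g := by
  set S : Finset (X × Q) :=
    Finset.univ.image (fun x : X => (x, (0 : Q))) ∪ Finset.univ.image g with hS
  obtain ⟨k, hk⟩ := Finset.exists_equiv_extend_of_card_eq (α := S) (t := S) (by simp)
    (s := Finset.univ.filter fun p : S => p.1.2 = 0) (f := fun p => g p.1.1)
    (by
      intro b hb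
      obtain ⟨p, -, rfl⟩ := Finset.mem_image.1 hb
      simp [hS])
    (by
      intro p hp p' hp' h
      have h1 := hg h
      simp only [Finset.coe_filter, Finset.mem_univ, true_and, Set.mem_ofPred_eq] at hp hp'
      exact Subtype.ext (Prod.ext h1 (hp.trans hp'.symm)))
  refine ⟨Equiv.Perm.ofSubtype (p := (· ∈ S)) k, fun x => ?_, fun p hp => ?_⟩
  · have hx : (x, (0 : Q)) ∈ S := by simp [hS]
    rw [Equiv.Perm.ofSubtype_apply_of_mem k hx]
    exact hk ⟨(x, 0), hx⟩ (by simp)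
  · by_contra hpS
    exact Equiv.Perm.mem_support.1 hp (Equiv.Perm.ofSubtype_apply_of_not_mem k hpS)

/-- If exchanging the two points `a ≠ b` before applying `h` preserves the property of extending
`f`, then `h` can be replaced by an even permutation, without enlarging a set `S ∋ a, b` that
contains the support. -/
theorem exists_even_of_swap {X Q : Type*} [Fintype X] [Fintype Q] [DecidableEq X]
    [DecidableEq Q] [Zero Q] (f : X → X) (h : Equiv.Perm (X × Q)) (S : Finset (X × Q))
    (hf : ∀ x, (h (x, 0)).1 = f x) (hS : h.support ⊆ S) (a b : X × Q) (hab : a ≠ b)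
    (ha : a ∈ S) (hb : b ∈ S) (hswap : ∀ x, (h (Equiv.swap a b (x, 0))).1 = f x) :
    ∃ h' : Equiv.Perm (X × Q), Equiv.Perm.sign h' = 1 ∧ (∀ x, (h' (x, 0)).1 = f x) ∧
      h'.support ⊆ S := by
  rcases Int.units_eq_one_or (Equiv.Perm.sign h) with h1 | h1
  · exact ⟨h, h1, hf, hS⟩
  · refine ⟨h * Equiv.swap a b, by simp [h1, Equiv.Perm.sign_swap hab], hswap, ?_⟩
    refine (Equiv.Perm.support_mul_le _ _).trans (sup_le hS ?_)
    rw [Equiv.Perm.support_swap hab]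
    intro p hp
    rcases Finset.mem_insert.1 hp with rfl | hp
    · exact ha
    · rwa [Finset.mem_singleton.1 hp]

/-- main combinatorial result of Section 2: every map `f` on `ZZ_2^n`
whose fibers have cardinality at most `2^q` can be completed to an even permutation
of `ZZ_2^{n+q}` moving at most `2^(n+1)` points. -/
theorem exists_even_extension_of_fiber_card_le
    (n q : ℕ) (hn : 1 ≤ n) (hq : 1 ≤ q)
    (f : (Fin n → ZMod 2) → (Fin n → ZMod 2))
    (hf : ∀ y : Fin n → ZMod 2, Nat.card {x : Fin n → ZMod 2 | f x = y} ≤ 2 ^ q) :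
    ∃ h : Equiv.Perm ((Fin n → ZMod 2) × (Fin q → ZMod 2)),
      Equiv.Perm.sign h = 1 ∧
      (∀ x : Fin n → ZMod 2, (h (x, 0)).1 = f x) ∧
      h.support.card ≤ 2 ^ (n + 1) := by
  have : Nonempty (Fin n) := ⟨⟨0, hn⟩⟩
  have : Nonempty (Fin q) := ⟨⟨0, hq⟩⟩
  suffices H : ∃ g : (Fin n → ZMod 2) → (Fin n → ZMod 2) × (Fin q → ZMod 2),
      ∃ h : Equiv.Perm ((Fin n → ZMod 2) × (Fin q → ZMod 2)),
      Equiv.Perm.sign h = 1 ∧ (∀ x, (h (x, 0)).1 = f x) ∧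
      h.support ⊆ Finset.univ.image (fun x => (x, 0)) ∪ Finset.univ.image g by
    obtain ⟨g, h, h1, h2, h3⟩ := H
    refine ⟨h, h1, h2, (Finset.card_le_card h3).trans ((Finset.card_union_le _ _).trans ?_)⟩
    refine (Nat.add_le_add Finset.card_image_le Finset.card_image_le).trans ?_
    simp [ZMod.card, pow_succ, mul_two]
  by_cases hinj : Function.Injective f
  -- The constant second coordinate `e ≠ 0` keeps the image off the zero section, so exchanging
  -- two image points leaves every `(x, 0)` in place.
  · obtain ⟨e, he⟩ := exists_ne (0 : Fin q → ZMod 2)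
    obtain ⟨u, v, huv⟩ := exists_pair_ne (Fin n → ZMod 2)
    have hg : Function.Injective fun x => (f x, e) := fun x y hxy => hinj (Prod.ext_iff.1 hxy).1
    obtain ⟨h, h1, h2⟩ := exists_perm_extending_section _ hg
    refine ⟨_, exists_even_of_swap f h _ (fun x => by rw [h1]) h2 (f u, e) (f v, e)
      (fun hE => huv (hg hE)) (by simp) (by simp) fun x => ?_⟩
    rw [Equiv.swap_apply_of_ne_of_ne (fun hE => he (Prod.ext_iff.1 hE).2.symm)
      (fun hE => he (Prod.ext_iff.1 hE).2.symm), h1]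
  · have hemb : ∀ y, Nonempty ({x // f x = y} ↪ (Fin q → ZMod 2)) := fun y => by
      apply Function.Embedding.nonempty_of_card_le
      rw [← Nat.card_eq_fintype_card]
      exact (hf y).trans (by simp [ZMod.card])
    let e := fun y => (hemb y).some
    have hg : Function.Injective fun x => (f x, e (f x) ⟨x, rfl⟩) := by
      intro x y hxy
      obtain ⟨h1, h2⟩ := Prod.ext_iff.1 hxy
      have key : ∀ z (hx : f x = z) (hy : f y = z), e z ⟨x, hx⟩ = e z ⟨y, hy⟩ → x = y :=
        fun z hx hy hE => congrArg Subtype.val ((e z).injective hE)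
      -- The proof component of the argument of `e` depends on the fiber, hence the transport.
      refine key (f y) h1 rfl (Eq.trans ?_ h2)
      have aux : ∀ z (hz : f x = z), e z ⟨x, hz⟩ = e (f x) ⟨x, rfl⟩ := by rintro _ rfl; rfl
      exact aux _ h1
    obtain ⟨u, v, hfuv, huv⟩ := Function.not_injective_iff.1 hinj
    obtain ⟨h, h1, h2⟩ := exists_perm_extending_section _ hg
    refine ⟨_, exists_even_of_swap f h _ (fun x => by rw [h1]) h2 (u, 0) (v, 0)
      (fun hE => huv (Prod.ext_iff.1 hE).1) (by simp) (by simp) fun x => ?_⟩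
    rw [Equiv.swap_apply_def]
    split_ifs with hu hv
    · rw [h1, show x = u from (Prod.ext_iff.1 hu).1]; exact hfuv.symm
    · rw [h1, show x = v from (Prod.ext_iff.1 hv).1]; exact hfuv
    · rw [h1]
end

section
/- Let n ≥ 1 and q ≥ 1, and let f : (Fin n → ZMod 2) → (Fin n → ZMod 2). There exists an even permutation h of (Fin n → ZMod 2) × (Fin q → ZMod 2) with (h (x, 0)).1 = f x for every x if and only if every fiber {x | f x = y} of f has cardinality at most 2^q. -/
/-! If `h` extends `f`, then `x ↦ (h (x, 0)).2` is injective on each fiber of `f`, which bounds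
the fiber by `2 ^ q`. Conversely, injecting each fiber into the cube `Fin q → ZMod 2` turns `f` into
the first component of an injection defined on the slice `{(x, 0)}`, and on a finite set such an
injection extends to a permutation. Since `n, q ≥ 1`, there are two distinct points off the slice,
so an odd permutation can be made even by precomposing with their transposition. -/


/-- `f` extends to an even permutation of `ZZ_2^{n+q}` if and only if
every fiber of `f` has cardinality at most `2^q`. -/
theorem exists_even_extension_iff_fiber_card_le
    (n q : ℕ) (hn : 1 ≤ n) (hq : 1 ≤ q)
    (f : (Fin n → ZMod 2) → (Fin n → ZMod 2)) :
    (∃ h : Equiv.Perm ((Fin n → ZMod 2) × (Fin q → ZMod 2)),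
        Equiv.Perm.sign h = 1 ∧ ∀ x : Fin n → ZMod 2, (h (x, 0)).1 = f x) ↔
    ∀ y : Fin n → ZMod 2, Nat.card {x : Fin n → ZMod 2 | f x = y} ≤ 2 ^ q := by
  have hcard : Nat.card (Fin q → ZMod 2) = 2 ^ q := by simp
  constructor
  · rintro ⟨h, -, hf⟩ y
    rw [← hcard]
    refine Nat.card_le_card_of_injective
      (fun x : {x : Fin n → ZMod 2 | f x = y} => (h (x.1, 0)).2) ?_
    rintro ⟨x, hx⟩ ⟨x', hx'⟩ hxx'
    have h1 : h (x, 0) = h (x', 0) :=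
      Prod.ext (by rw [hf, hf]; exact hx.trans hx'.symm) hxx'
    exact Subtype.ext (congrArg Prod.fst (h.injective h1))
  · intro hfib
    have hemb : ∀ y, ∃ e : {x : Fin n → ZMod 2 | f x = y} → (Fin q → ZMod 2),
        Function.Injective e := by
      intro y
      have hy := hfib y
      rw [← hcard, Nat.card_eq_fintype_card, Nat.card_eq_fintype_card] at hy
      obtain ⟨e⟩ := Function.Embedding.nonempty_of_card_le hy
      exact ⟨e, e.injective⟩
    choose e he using hemb
    let F : (Fin n → ZMod 2) × (Fin q → ZMod 2) → (Fin n → ZMod 2) × (Fin q → ZMod 2) :=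
      fun p => (f p.1, e (f p.1) ⟨p.1, rfl⟩)
    have hF : Set.InjOn F {p | p.2 = 0} := by
      rintro ⟨x, z⟩ hz ⟨x', z'⟩ hz' hxx'
      have h1 : f x = f x' := congrArg Prod.fst hxx'
      have h2 : e (f x) ⟨x, rfl⟩ = e (f x') ⟨x', rfl⟩ := congrArg Prod.snd hxx'
      -- Both points must be placed in one fiber before injectivity of `e` applies.
      have h3 : ∀ y (hy : f x = y), e (f x) ⟨x, rfl⟩ = e y ⟨x, hy⟩ := by
        rintro _ rfl
        rfl
      have h4 := he _ ((h3 _ h1).symm.trans h2)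
      exact Prod.ext (congrArg Subtype.val h4) (hz.trans hz'.symm)
    obtain ⟨g, hg⟩ := Set.MapsTo.exists_equiv_extend_of_card_eq
      (t := (Finset.univ : Finset ((Fin n → ZMod 2) × (Fin q → ZMod 2))))
      Finset.card_univ.symm (fun _ _ => Finset.mem_coe.2 (Finset.mem_univ _)) hF
    let h : Equiv.Perm ((Fin n → ZMod 2) × (Fin q → ZMod 2)) :=
      g.trans (Equiv.subtypeUnivEquiv Finset.mem_univ)
    have hh : ∀ x, (h (x, 0)).1 = f x := fun x => congrArg Prod.fst (hg (x, 0) rfl)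
    rcases Int.units_eq_one_or (Equiv.Perm.sign h) with hs | hs
    · exact ⟨h, hs, hh⟩
    · have hne : ((0 : Fin n → ZMod 2), (1 : Fin q → ZMod 2)) ≠ (1, 1) := fun hc =>
        zero_ne_one (congrFun (congrArg Prod.fst hc) ⟨0, hn⟩)
      have hoff : ∀ x a : Fin n → ZMod 2, (x, (0 : Fin q → ZMod 2)) ≠ (a, 1) := fun x a hc =>
        zero_ne_one (congrFun (congrArg Prod.snd hc) ⟨0, hq⟩)
      refine ⟨h * Equiv.swap (0, 1) (1, 1), ?_, fun x => ?_⟩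
      · rw [Equiv.Perm.sign_mul, hs, Equiv.Perm.sign_swap hne]
        rfl
      · rw [Equiv.Perm.mul_apply, Equiv.swap_apply_of_ne_of_ne (hoff x 0) (hoff x 1), hh]
end

section
/- Let n ≥ 1 and q ≥ 1, and let f be a bijection of (Fin n → ZMod 2). Then there exists an even permutation h of (Fin n → ZMod 2) × (Fin q → ZMod 2) such that h (x, 0) = (f x, 0) for every x : Fin n → ZMod 2, and the cardinality of the support of h is at most 2^n + 2. -/
/-!
The bijection `f` is transported along the embedding `x ↦ (x, 0)` and extended by the identity,
giving a permutation `g` supported in the padded cube, hence moving at most `2 ^ n` points.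
If `g` is odd, it is multiplied by the transposition of two points whose padding is the
all-ones vector: these exist because `1 ≤ n`, and lie outside the padded cube because `1 ≤ q`,
so the values on the padded cube do not change and at most two more points are moved.
-/

/-- case `Y = X` of Section 2: a bijection `f` of `ZZ_2^n` lifts to an
even permutation of `ZZ_2^{n+q}` fixing the padding and moving at most `2^n + 2`
points. -/
theorem exists_even_extension_of_bijective
    (n q : ℕ) (hn : 1 ≤ n) (hq : 1 ≤ q)
    (f : (Fin n → ZMod 2) → (Fin n → ZMod 2))
    (hf : Function.Bijective f) :
    ∃ h : Equiv.Perm ((Fin n → ZMod 2) × (Fin q → ZMod 2)),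
      Equiv.Perm.sign h = 1 ∧
      (∀ x : Fin n → ZMod 2, h (x, 0) = (f x, 0)) ∧
      h.support.card ≤ 2 ^ n + 2 := by
  have hone : ∀ {m : ℕ}, 1 ≤ m → (0 : Fin m → ZMod 2) ≠ 1 := fun hm h =>
    absurd (congrFun h ⟨0, hm⟩) (by simp)
  let ι : (Fin n → ZMod 2) ↪ (Fin n → ZMod 2) × (Fin q → ZMod 2) :=
    ⟨fun x => (x, 0), fun x y h => congrArg Prod.fst h⟩
  let g := Equiv.Perm.viaFintypeEmbedding (Equiv.ofBijective f hf) ι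
  have hg : ∀ x, g (x, 0) = (f x, 0) := fun x =>
    Equiv.Perm.viaFintypeEmbedding_apply_image (Equiv.ofBijective f hf) ι x
  have hcard : g.support.card ≤ 2 ^ n := by
    have hsub : g.support ⊆ Finset.univ.map ι := by
      intro y hy
      by_contra hy'
      refine Equiv.Perm.mem_support.1 hy
        (Equiv.Perm.viaFintypeEmbedding_apply_notMem_range _ ι ?_)
      simpa using hy'
    simpa using Finset.card_le_card hsub
  rcases Int.units_eq_one_or (Equiv.Perm.sign g) with hs | hs
  · exact ⟨g, hs, hg, hcard.trans (Nat.le_add_right _ _)⟩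
  · let a : (Fin n → ZMod 2) × (Fin q → ZMod 2) := (0, 1)
    let b : (Fin n → ZMod 2) × (Fin q → ZMod 2) := (1, 1)
    have hab : a ≠ b := fun h => hone hn (congrArg Prod.fst h)
    refine ⟨g * Equiv.swap a b, ?_, fun x => ?_, ?_⟩
    · rw [Equiv.Perm.sign_mul, hs, Equiv.Perm.sign_swap hab]
      simp
    · rw [Equiv.Perm.mul_apply, Equiv.swap_apply_of_ne_of_ne, hg]
      · exact fun h => hone hq (congrArg Prod.snd h)
      · exact fun h => hone hq (congrArg Prod.snd h)
    · calc (g * Equiv.swap a b).support.card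
          ≤ (g.support ∪ (Equiv.swap a b).support).card :=
            Finset.card_le_card (Equiv.Perm.support_mul_le _ _)
        _ ≤ g.support.card + (Equiv.swap a b).support.card := Finset.card_union_le _ _
        _ ≤ 2 ^ n + 2 := by
            rw [Equiv.Perm.card_support_swap hab]
            exact Nat.add_le_add_right hcard 2
end

section
/- Let n ≥ 1 and q ≥ n, and let f : (Fin n → ZMod 2) → (Fin n → ZMod 2) be any map. Then there exists an even permutation h of (Fin n → ZMod 2) × (Fin q → ZMod 2) such that (h (x, 0)).1 = f x for every x, and the cardinality of the support of h is at most 2^(n+1). -/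
/-!
Choose an injection `φ` of `ZZ_2^n` into `ZZ_2^q`; then `x ↦ (f x, φ x)` is injective, so it suffices
to find an even permutation sending `(x, 0)` to `(f x, φ x)` and moving at most `2 * 2^n` points.

The `2^n` sources and the `2^n` targets lie in a common set `U` with exactly `2 * 2^n` elements.
The partial bijection extends to a permutation of `U`, and `U` contains `2^n ≥ 2` points
that are not sources. Precomposing with the transposition of two of these changes the
parity without affecting the images of the sources or leaving `U`.
-/

/-- Two injections into the same finite type are matched by an even permutation supported on a set of
twice the size of the source, provided there is room for such a set and the source has at least two
elements. -/
theorem exists_even_perm_extending {ι α : Type*} [Fintype ι] [Fintype α] [DecidableEq α]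
    (i g : ι → α) (hi : Function.Injective i) (hg : Function.Injective g)
    (hι : 2 ≤ Fintype.card ι) (hα : 2 * Fintype.card ι ≤ Fintype.card α) :
    ∃ h : Equiv.Perm α, Equiv.Perm.sign h = 1 ∧ (∀ x, h (i x) = g x) ∧
      h.support.card ≤ 2 * Fintype.card ι := by
  classical
  have hS : (Finset.univ.image i).card = Fintype.card ι := Finset.card_image_of_injective _ hi
  have hT : (Finset.univ.image g).card = Fintype.card ι := Finset.card_image_of_injective _ hg
  have hST : (Finset.univ.image i ∪ Finset.univ.image g).card ≤ 2 * Fintype.card ι :=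
    (Finset.card_union_le _ _).trans (by omega)
  obtain ⟨U, hU, hUc⟩ := Finset.exists_superset_card_eq hST hα
  have hiU : ∀ x, i x ∈ U := fun x => hU (by simp)
  have hgU : ∀ x, g x ∈ U := fun x => hU (by simp)
  -- The junk value `id` of the extension off the range of `i` is never used.
  obtain ⟨e, he⟩ := Finset.exists_equiv_extend_of_card_eq (α := U) (t := U) (by simp)
    (s := Finset.univ.filter fun u : U => ∃ x, i x = u)
    (f := fun u => Function.extend i g id u)
    (by
      intro y hy
      simp only [Finset.mem_image, Finset.mem_filter, Finset.mem_univ, true_and] at hy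
      obtain ⟨u, ⟨x, hx⟩, rfl⟩ := hy
      rw [← hx, hi.extend_apply]
      exact hgU x)
    (by
      intro u hu v hv huv
      simp only [Finset.coe_filter, Finset.mem_univ, true_and, Set.mem_ofPred_eq] at hu hv
      obtain ⟨x, hx⟩ := hu
      obtain ⟨y, hy⟩ := hv
      simp only [← hx, ← hy, hi.extend_apply] at huv
      exact Subtype.ext (by rw [← hx, ← hy, hg huv]))
  have he' : ∀ x, (e ⟨i x, hiU x⟩ : α) = g x := fun x => by
    rw [he _ (by simp)]
    exact hi.extend_apply _ _ _
  have key : ∀ σ : Equiv.Perm U, Equiv.Perm.sign σ = 1 →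
      (∀ x, (σ ⟨i x, hiU x⟩ : α) = g x) →
      ∃ h : Equiv.Perm α, Equiv.Perm.sign h = 1 ∧ (∀ x, h (i x) = g x) ∧
        h.support.card ≤ 2 * Fintype.card ι := by
    intro σ hσ hx
    refine ⟨Equiv.Perm.ofSubtype σ, by rw [Equiv.Perm.sign_ofSubtype, hσ], fun x => ?_, ?_⟩
    · rw [Equiv.Perm.ofSubtype_apply_of_mem σ (hiU x), hx]
    · rw [← hUc]
      refine Finset.card_le_card fun y hy => ?_
      by_contra hyU
      exact Equiv.Perm.mem_support.1 hy (Equiv.Perm.ofSubtype_apply_of_not_mem σ hyU)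
  rcases Int.units_eq_one_or (Equiv.Perm.sign e) with h1 | h1
  · exact key e h1 he'
  · have hd : 1 < (U \ Finset.univ.image i).card := by
      rw [Finset.card_sdiff_of_subset (Finset.union_subset_left hU)]
      omega
    obtain ⟨a, ha, b, hb, hab⟩ := Finset.one_lt_card.1 hd
    simp only [Finset.mem_sdiff, Finset.mem_image, Finset.mem_univ, true_and, not_exists] at ha hb
    refine key (e * Equiv.swap ⟨a, ha.1⟩ ⟨b, hb.1⟩) ?_ fun x => ?_
    · rw [Equiv.Perm.sign_mul, h1, Equiv.Perm.sign_swap (by simpa using hab)]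
      rfl
    · rw [Equiv.Perm.mul_apply, Equiv.swap_apply_of_ne_of_ne, he']
      · simpa using ha.2 x
      · simpa using hb.2 x

/-- `F(n,q) = P₂(n,n)` for `q ≥ n`: every map `f` on `ZZ_2^n` can be
completed to an even permutation of `ZZ_2^{n+q}` with at most `2^(n+1)` moved
points whenever `q ≥ n`. -/
theorem exists_even_extension_of_n_le_q
    (n q : ℕ) (hn : 1 ≤ n) (hq : n ≤ q)
    (f : (Fin n → ZMod 2) → (Fin n → ZMod 2)) :
    ∃ h : Equiv.Perm ((Fin n → ZMod 2) × (Fin q → ZMod 2)),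
      Equiv.Perm.sign h = 1 ∧
      (∀ x : Fin n → ZMod 2, (h (x, 0)).1 = f x) ∧
      h.support.card ≤ 2 ^ (n + 1) := by
  have hc : ∀ m : ℕ, Fintype.card (Fin m → ZMod 2) = 2 ^ m := fun m => by simp [ZMod.card]
  have h2 : ∀ m : ℕ, 1 ≤ m → 2 ≤ 2 ^ m := fun m hm =>
    (pow_one 2).symm.le.trans (Nat.pow_le_pow_right (by norm_num) hm)
  obtain ⟨φ⟩ : Nonempty ((Fin n → ZMod 2) ↪ (Fin q → ZMod 2)) :=
    Function.Embedding.nonempty_of_card_le (by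
      rw [hc, hc]
      exact Nat.pow_le_pow_right (by norm_num) hq)
  obtain ⟨h, hs, hx, hcard⟩ := exists_even_perm_extending
    (fun x : Fin n → ZMod 2 => (x, (0 : Fin q → ZMod 2))) (fun x => (f x, φ x))
    (fun x y hxy => (Prod.ext_iff.1 hxy).1)
    (fun x y hxy => φ.injective (Prod.ext_iff.1 hxy).2)
    (by rw [hc]; exact h2 n hn)
    (by
      rw [Fintype.card_prod, hc, hc, mul_comm]
      exact Nat.mul_le_mul_left _ (h2 q (hn.trans hq)))
  refine ⟨h, ?_, fun x => by rw [hx], ?_⟩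
  · convert hs
  · rw [hc] at hcard
    rw [pow_succ, mul_comm]
    convert hcard
end

section
/- Let n ≥ 1 and let f : (Fin n → ZMod 2) → (Fin n → ZMod 2) be non-injective, and let d ≥ 2 be the maximum cardinality of a fiber {x | f x = y} of f. Then the least q ≥ 1 for which there exists an even permutation h of (Fin n → ZMod 2) × (Fin q → ZMod 2) with (h (x, 0)).1 = f x for all x is exactly ⌈log₂ d⌉, i.e. the least q with d ≤ 2^q. -/
/-!
A permutation `h` extending `f` sends the fiber of `f` over `y` injectively into the slice
`{y} × ZZ_2^q`, so every fiber has at most `2 ^ q` points (`card_fiber_le_of_extends`).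
Conversely, if all fibers have at most `2 ^ q` points, labelling each fiber injectively by
elements of `ZZ_2^q` turns `x ↦ (f x, label x)` into an injection, and the resulting partial
injection on `ZZ_2^n × {0}` of the finite set `ZZ_2^{n+q}` extends to a permutation
(`exists_perm_extends`). Parity costs nothing: for `n, q ≥ 1` there are two points outside
`ZZ_2^n × {0}`, and precomposing with their transposition flips the sign without changing the
values on `ZZ_2^n × {0}` (`exists_even_perm_extends`).
-/

theorem card_fiber_le_of_extends {n q : ℕ} {f : (Fin n → ZMod 2) → (Fin n → ZMod 2)}
    {h : Equiv.Perm ((Fin n → ZMod 2) × (Fin q → ZMod 2))}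
    (hh : ∀ x : Fin n → ZMod 2, (h (x, 0)).1 = f x) (y : Fin n → ZMod 2) :
    Nat.card {x : Fin n → ZMod 2 | f x = y} ≤ 2 ^ q := by
  have hinj : Function.Injective
      (fun x : {x : Fin n → ZMod 2 | f x = y} => (h (x.1, 0)).2) := by
    rintro ⟨a, ha⟩ ⟨b, hb⟩ hab
    have hab' : h (a, 0) = h (b, 0) :=
      Prod.ext (by rw [hh, hh]; exact ha.trans hb.symm) hab
    exact Subtype.ext (congrArg Prod.fst (h.injective hab'))
  simpa [Nat.card_eq_fintype_card (α := Fin q → ZMod 2), ZMod.card] using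
    Nat.card_le_card_of_injective _ hinj

theorem exists_perm_extends {n q : ℕ} {f : (Fin n → ZMod 2) → (Fin n → ZMod 2)}
    (hc : ∀ y, Nat.card {x : Fin n → ZMod 2 | f x = y} ≤ 2 ^ q) :
    ∃ h : Equiv.Perm ((Fin n → ZMod 2) × (Fin q → ZMod 2)),
      ∀ x : Fin n → ZMod 2, (h (x, 0)).1 = f x := by
  classical
  have hemb : ∀ y, Nonempty ({x : Fin n → ZMod 2 | f x = y} ↪ (Fin q → ZMod 2)) := by
    intro y
    apply Function.Embedding.nonempty_of_card_le
    have := hc y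
    rw [Nat.card_eq_fintype_card] at this
    simpa [ZMod.card] using this
  let e := fun y => (hemb y).some
  let g : (Fin n → ZMod 2) × (Fin q → ZMod 2) → (Fin n → ZMod 2) × (Fin q → ZMod 2) :=
    fun p => (f p.1, e (f p.1) ⟨p.1, rfl⟩)
  have hlabel : ∀ a b y (ha : f a = y) (hb : f b = y), e y ⟨a, ha⟩ = e y ⟨b, hb⟩ → a = b :=
    fun a b y ha hb hab => congrArg Subtype.val ((e y).injective hab)
  have hg : Set.InjOn g {p | p.2 = 0} := by
    rintro ⟨a, u⟩ hu ⟨b, v⟩ hv hab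
    obtain rfl : u = 0 := hu
    obtain rfl : v = 0 := hv
    have h1 : f a = f b := congrArg Prod.fst hab
    have h2 : e (f a) ⟨a, rfl⟩ = e (f b) ⟨b, rfl⟩ := congrArg Prod.snd hab
    -- the label of `b`, read in the fiber over `y` rather than over `f b`
    have h3 : ∀ y (hy : f b = y), e (f b) ⟨b, rfl⟩ = e y ⟨b, hy⟩ := by
      rintro _ rfl
      rfl
    rw [hlabel a b (f a) rfl h1.symm (h2.trans (h3 _ h1.symm))]
  obtain ⟨h, hh⟩ := Set.MapsTo.exists_equiv_extend_of_card_eq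
    (t := Finset.univ) (by simp) (s := {p | p.2 = 0}) (f := g) (fun _ _ => by simp) hg
  refine ⟨h.trans (Equiv.subtypeUnivEquiv (by simp)), fun x => ?_⟩
  have := hh (x, 0) rfl
  simp [this, g]

theorem exists_even_perm_extends {n q : ℕ} (hn : 1 ≤ n) (hq : 1 ≤ q)
    {f : (Fin n → ZMod 2) → (Fin n → ZMod 2)}
    (hc : ∀ y, Nat.card {x : Fin n → ZMod 2 | f x = y} ≤ 2 ^ q) :
    ∃ h : Equiv.Perm ((Fin n → ZMod 2) × (Fin q → ZMod 2)),
      Equiv.Perm.sign h = 1 ∧ ∀ x : Fin n → ZMod 2, (h (x, 0)).1 = f x := by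
  obtain ⟨h, hh⟩ := exists_perm_extends hc
  rcases Int.units_eq_one_or (Equiv.Perm.sign h) with hs | hs
  · exact ⟨h, hs, hh⟩
  have h01 : ∀ m : ℕ, 1 ≤ m → (0 : Fin m → ZMod 2) ≠ 1 := fun m hm h0 =>
    zero_ne_one (congrFun h0 ⟨0, hm⟩)
  have hne : ((0, 1) : (Fin n → ZMod 2) × (Fin q → ZMod 2)) ≠ (1, 1) :=
    fun h0 => h01 n hn (congrArg Prod.fst h0)
  refine ⟨h * Equiv.swap (0, 1) (1, 1), ?_, fun x => ?_⟩
  · rw [Equiv.Perm.sign_mul, hs, Equiv.Perm.sign_swap hne]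
    rfl
  · rw [Equiv.Perm.mul_apply, Equiv.swap_apply_of_ne_of_ne, hh]
    · exact fun h0 => h01 q hq (congrArg Prod.snd h0)
    · exact fun h0 => h01 q hq (congrArg Prod.snd h0)

/-- for a non-injective `f` with maximal fiber cardinality `d ≥ 2`, the
least `q ≥ 1` admitting an even permutation of `ZZ_2^{n+q}` extending `f` is exactly
`⌈log₂ d⌉`, which is also the least `q ≥ 1` with `d ≤ 2^q`. -/
theorem least_q_for_even_extension_eq_clog
    (n : ℕ) (hn : 1 ≤ n)
    (f : (Fin n → ZMod 2) → (Fin n → ZMod 2))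
    (hf : ¬ Function.Injective f) (d : ℕ)
    (hd : d = Finset.univ.sup fun y : Fin n → ZMod 2 =>
      Nat.card {x : Fin n → ZMod 2 | f x = y})
    (hd2 : 2 ≤ d) :
    IsLeast {q : ℕ | 1 ≤ q ∧
        ∃ h : Equiv.Perm ((Fin n → ZMod 2) × (Fin q → ZMod 2)),
          Equiv.Perm.sign h = 1 ∧ ∀ x : Fin n → ZMod 2, (h (x, 0)).1 = f x}
      (Nat.clog 2 d) ∧
    IsLeast {q : ℕ | 1 ≤ q ∧ d ≤ 2 ^ q} (Nat.clog 2 d) := by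
  have hle : ∀ q, d ≤ 2 ^ q ↔ ∀ y, Nat.card {x : Fin n → ZMod 2 | f x = y} ≤ 2 ^ q := by
    intro q
    rw [hd, Finset.sup_le_iff]
    simp only [Finset.mem_univ, true_implies]
  have hpos : 1 ≤ Nat.clog 2 d := Nat.clog_pos one_lt_two hd2
  have hpow : d ≤ 2 ^ Nat.clog 2 d := Nat.le_pow_clog one_lt_two d
  refine ⟨⟨⟨hpos, exists_even_perm_extends hn hpos ((hle _).1 hpow)⟩, ?_⟩,
    ⟨hpos, hpow⟩, fun q hq => Nat.clog_le_of_le_pow hq.2⟩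
  rintro q ⟨-, h, -, hh⟩
  exact Nat.clog_le_of_le_pow ((hle q).2 (card_fiber_le_of_extends hh))
end

section
/- Let n ≥ 1, q ≥ 1 and let f : (Fin n → ZMod 2) → (Fin n → ZMod 2) have every fiber of cardinality at most 2^q. Let X = {(x, 0) | x : Fin n → ZMod 2} ⊆ (Fin n → ZMod 2) × (Fin q → ZMod 2). Then there exists an injective map g : X → (Fin n → ZMod 2) × (Fin q → ZMod 2) such that (g (x, 0)).1 = f x for all x and such that the image g[X] intersects X (i.e. there exists x with g (x, 0) ∈ X); consequently |X ∪ g[X]| ≤ 2^(n+1) − 1. -/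
/-!
Each fiber of `f` embeds in `ZZ_2^q`, since it has at most `2^q` elements. Translating all these
embeddings by one fixed vector keeps them injective and makes the label of the point `0` equal
to `0`, so the value at `0` is a padded vector. The bound on the union is then
inclusion–exclusion: `X` and `g[X]` both have `2^n` elements and share at least one.
-/

/-- The set `X ⊆ ZZ_2^{n+q}` of padded vectors: those whose last `q` coordinates
are all zero. -/
def paddedCube (n q : ℕ) : Set ((Fin n → ZMod 2) × (Fin q → ZMod 2)) :=
  {p | p.2 = 0}

/-- Labels in `ZZ_2^q` that separate the points of each fiber of `f`, with label `0` at the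
point `0`. -/
lemma exists_fiber_labelling (n q : ℕ) (f : (Fin n → ZMod 2) → (Fin n → ZMod 2))
    (hf : ∀ y : Fin n → ZMod 2, Nat.card {x : Fin n → ZMod 2 | f x = y} ≤ 2 ^ q) :
    ∃ h : (Fin n → ZMod 2) → (Fin q → ZMod 2),
      (∀ x x', f x = f x' → h x = h x' → x = x') ∧ h 0 = 0 := by
  have he : ∀ y, Nonempty ({x : Fin n → ZMod 2 | f x = y} ↪ (Fin q → ZMod 2)) := by
    intro y
    classical
    apply Function.Embedding.nonempty_of_card_le
    rw [← Nat.card_eq_fintype_card]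
    simpa [ZMod.card] using hf y
  let e := fun y => (he y).some
  refine ⟨fun x => e (f x) ⟨x, rfl⟩ - e (f 0) ⟨0, rfl⟩, ?_, by simp⟩
  intro x x' hfx hx
  have hx' : e (f x) ⟨x, rfl⟩ = e (f x') ⟨x', rfl⟩ := sub_left_injective hx
  -- Both labels are read off the embedding of the single fiber over `f x'`.
  have hmove : ∀ y (hy : f x = y), e (f x) ⟨x, rfl⟩ = e y ⟨x, hy⟩ := by
    rintro y rfl
    rfl
  rw [hmove _ hfx] at hx'
  exact congrArg Subtype.val ((e (f x')).injective hx')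

lemma ncard_paddedCube (n q : ℕ) : (paddedCube n q).ncard = 2 ^ n := by
  have hX : paddedCube n q = Set.range fun x : Fin n → ZMod 2 => (x, (0 : Fin q → ZMod 2)) := by
    ext ⟨a, b⟩
    simp [paddedCube, eq_comm]
  rw [hX, ← Set.image_univ, Set.ncard_image_of_injective _ (Prod.mk_left_injective _)]
  simp [Set.ncard_univ, ZMod.card]

/-- if every fiber of `f` has at most `2^q` elements, then there is an
injective `g : X → ZZ_2^{n+q}` with `(g (x,0)).1 = f x`, whose image meets `X`;
consequently `|X ∪ g[X]| ≤ 2^(n+1) - 1`. -/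
theorem exists_injective_assignment_on_padded_cube
    (n q : ℕ) (hn : 1 ≤ n) (hq : 1 ≤ q)
    (f : (Fin n → ZMod 2) → (Fin n → ZMod 2))
    (hf : ∀ y : Fin n → ZMod 2, Nat.card {x : Fin n → ZMod 2 | f x = y} ≤ 2 ^ q) :
    ∃ g : paddedCube n q → (Fin n → ZMod 2) × (Fin q → ZMod 2),
      Function.Injective g ∧
      (∀ x : Fin n → ZMod 2, (g ⟨(x, 0), rfl⟩).1 = f x) ∧
      (∃ x : Fin n → ZMod 2, g ⟨(x, 0), rfl⟩ ∈ paddedCube n q) ∧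
      Nat.card ↥(paddedCube n q ∪ Set.range g) ≤ 2 ^ (n + 1) - 1 := by
  obtain ⟨h, hinj, h0⟩ := exists_fiber_labelling n q f hf
  let g : paddedCube n q → (Fin n → ZMod 2) × (Fin q → ZMod 2) := fun p => (f p.1.1, h p.1.1)
  have hg : Function.Injective g := by
    rintro ⟨⟨a, b⟩, hb⟩ ⟨⟨a', b'⟩, hb'⟩ hp
    obtain ⟨h1, h2⟩ := Prod.mk.inj hp
    have haa : a = a' := hinj a a' h1 h2
    have hbb : b = b' := Eq.trans hb (Eq.symm hb')
    subst haa hbb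
    rfl
  refine ⟨g, hg, fun _ => rfl, ⟨0, h0⟩, ?_⟩
  have hY : (Set.range g).ncard = 2 ^ n := by
    rw [← Set.image_univ, Set.ncard_image_of_injective _ hg, Set.ncard_univ,
      Nat.card_coe_set_eq, ncard_paddedCube]
  have hI : 0 < (paddedCube n q ∩ Set.range g).ncard :=
    (Set.ncard_pos (Set.toFinite _)).2 ⟨g ⟨(0, 0), rfl⟩, h0, Set.mem_range_self _⟩
  have hU := Set.ncard_union_add_ncard_inter (paddedCube n q) (Set.range g)
  rw [ncard_paddedCube, hY] at hU
  rw [Nat.card_coe_set_eq, pow_succ]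
  omega
end
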